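/- (Rate of convergence in the SLLN for the RWG.) Suppose p > 0. Then almost surely ‖S_n/n − μ − (p/(2−p))·m‖² = O((log n)/n) as n → ∞; that is, almost surely there exist C>0 and N such that for all n ≥ N, ‖S_n/n − μ − (p/(2−p))·m‖² ≤ C (log n)/n. -/

import Mathlib

open MeasureTheory ProbabilityTheory Real Filter Set
open scoped BigOperators NNReal

noncomputable section

namespace RWG

abbrev E : Type := EuclideanSpace ℝ (Fin 3)

def vec (x y z : ℝ) : E := (EuclideanSpace.equiv (Fin 3) ℝ).symm ![x, y, z]

/-- The four families of vertices of the `2h` graphite lattice. -/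
def V (a h : ℝ) (i j : Fin 2) : Set E :=
  {v | ∃ k l n : ℤ, v =
    vec (a * ((-1 : ℝ) ^ ((i : ℕ) + 1) * (if j = 1 then (1 : ℝ) else 0) + (3 / 2) * k))
        (a * ((Real.sqrt 3 / 2) * k + Real.sqrt 3 * l))
        (h * (2 * n + (if i ≠ j then (1 : ℝ) else 0)))}

/-- Horizontal jump from a vertex of horizontal type `i` in direction `k`. -/
def w (a : ℝ) (i : Fin 2) (k : Fin 3) : E :=
  vec (a * Real.cos (2 * (k : ℕ) * π / 3 + (i : ℕ) * π))
      (a * Real.sin (2 * (k : ℕ) * π / 3 + (i : ℕ) * π)) 0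

/-- `S` is a random walk on graphite with parameters `a, h, p, α, q` and natural filtration `F`. -/
structure IsRWG {Ω : Type} [MeasurableSpace Ω] (P : Measure Ω)
    (a h p α : ℝ) (q : Fin 2 → Fin 2 → Fin 3 → ℝ)
    (S : ℕ → Ω → E) (F : ℕ → MeasurableSpace Ω) : Prop where
  prob : IsProbabilityMeasure P
  ha : 0 < a
  hh : 0 < h
  hp0 : 0 ≤ p
  hp1 : p ≤ 1
  hα0 : 0 < α
  hα1 : α < 1
  hq : ∀ i j k, 0 ≤ q i j k
  hqsum0 : ∀ i, q i 0 0 + q i 0 1 + q i 0 2 = 1 - p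
  hqsum1 : ∀ i, q i 1 0 + q i 1 1 + q i 1 2 = 1
  hS0 : ∀ ω, S 0 ω = 0
  hSmeas : ∀ n, Measurable (S n)
  hF : ∀ n, F n =
    MeasurableSpace.comap (fun ω (k : Fin n) => S ((k : ℕ) + 1) ω - S (k : ℕ) ω)
      MeasurableSpace.pi
  hTrans : ∀ (n : ℕ) (f : E → ℝ), Measurable f → (∃ C, ∀ x, |f x| ≤ C) →
    P[fun ω => f (S (n + 1) ω)|F n] =ᵐ[P]
      fun ω => ∑ i : Fin 2,
        ((V a h i 0).indicator (fun _ => (1 : ℝ)) (S n ω) *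
          (α * p * f (S n ω + vec 0 0 h) + (1 - α) * p * f (S n ω + vec 0 0 (-h)) +
            ∑ k : Fin 3, q i 0 k * f (S n ω + w a i k)) +
        (V a h i 1).indicator (fun _ => (1 : ℝ)) (S n ω) *
          ∑ k : Fin 3, q i 1 k * f (S n ω + w a i k))

def uu (q : Fin 2 → Fin 2 → Fin 3 → ℝ) (i j : Fin 2) : ℝ := q i j 1 + q i j 2

def vv (q : Fin 2 → Fin 2 → Fin 3 → ℝ) (i j : Fin 2) : ℝ := q i j 1 - q i j 2

def ss (q : Fin 2 → Fin 2 → Fin 3 → ℝ) (i j : Fin 2) : ℝ := uu q i j * (1 - uu q i j)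

def tt (q : Fin 2 → Fin 2 → Fin 3 → ℝ) (i j : Fin 2) : ℝ := vv q i j * (uu q i j - 1)

/-- The vector `μ` of the RWG. -/
def muG (a h p α : ℝ) (q : Fin 2 → Fin 2 → Fin 3 → ℝ) : E :=
  vec (3 * a / 8 * (-(uu q 0 0 + uu q 0 1) + (uu q 1 0 + uu q 1 1)))
      (a * Real.sqrt 3 / 8 * ((vv q 0 0 + vv q 0 1) - (vv q 1 0 + vv q 1 1)))
      (h * p / 2 * (2 * α - 1))

/-- The vector `m` of the RWG. -/
def mG (a h p α : ℝ) (q : Fin 2 → Fin 2 → Fin 3 → ℝ) : E :=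
  vec (3 * a / 8 * (-(uu q 0 0 - uu q 0 1) + (uu q 1 0 - uu q 1 1)))
      (a * Real.sqrt 3 / 8 * ((vv q 0 0 - vv q 0 1) - (vv q 1 0 - vv q 1 1)))
      (h * p / 2 * (2 * α - 1))

/-- The vector `θ` of the RWG. -/
def thetaG (a p : ℝ) (q : Fin 2 → Fin 2 → Fin 3 → ℝ) : E :=
  vec (a * ((1 - p / 2) - 3 / 8 * ((uu q 0 0 + uu q 0 1) + (uu q 1 0 + uu q 1 1))))
      (a * Real.sqrt 3 / 8 * ((vv q 0 0 + vv q 0 1) + (vv q 1 0 + vv q 1 1))) 0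

/-- The vector `ρ` of the RWG. -/
def rhoG (a p : ℝ) (q : Fin 2 → Fin 2 → Fin 3 → ℝ) : E :=
  vec (a * (-(p / 2) - 3 / 8 * ((uu q 0 0 - uu q 0 1) + (uu q 1 0 - uu q 1 1))))
      (a * Real.sqrt 3 / 8 * ((vv q 0 0 - vv q 0 1) + (vv q 1 0 - vv q 1 1))) 0

/-- The vector `ζ = (0, 0, hp(2α−1))`. -/
def zetaG (h p α : ℝ) : E := vec 0 0 (h * p * (2 * α - 1))

/-- The indicator process `i_n`. -/
def iP {Ω : Type} (a h : ℝ) (S : ℕ → Ω → E) (n : ℕ) (ω : Ω) : ℝ :=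
  (V a h 0 0 ∪ V a h 0 1).indicator (fun _ => (1 : ℝ)) (S n ω) -
    (V a h 1 0 ∪ V a h 1 1).indicator (fun _ => (1 : ℝ)) (S n ω)

/-- The indicator process `j_n`. -/
def jP {Ω : Type} (a h : ℝ) (S : ℕ → Ω → E) (n : ℕ) (ω : Ω) : ℝ :=
  (V a h 0 0 ∪ V a h 1 0).indicator (fun _ => (1 : ℝ)) (S n ω) -
    (V a h 0 1 ∪ V a h 1 1).indicator (fun _ => (1 : ℝ)) (S n ω)

/-- The indicator process `k_n`. -/
def kP {Ω : Type} (a h : ℝ) (S : ℕ → Ω → E) (n : ℕ) (ω : Ω) : ℝ :=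
  (V a h 0 0 ∪ V a h 1 1).indicator (fun _ => (1 : ℝ)) (S n ω) -
    (V a h 0 1 ∪ V a h 1 0).indicator (fun _ => (1 : ℝ)) (S n ω)

/-- The matrix `σ²` of the RWG. -/
def sigmaG (a h p α : ℝ) (q : Fin 2 → Fin 2 → Fin 3 → ℝ) : Matrix (Fin 3) (Fin 3) ℝ :=
  !![a ^ 2 / 4 * (2 * p * (1 - p) + 9 / 4 * (ss q 0 0 + ss q 1 0 + ss q 0 1 + ss q 1 1)
        - 3 * p * (uu q 0 0 + uu q 1 0)),
     a ^ 2 * Real.sqrt 3 / 16 * (3 * (tt q 0 0 + tt q 1 0 + tt q 0 1 + tt q 1 1)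
        + 2 * p * (vv q 0 0 + vv q 1 0)),
     a * h / 8 * (-4 * p * (1 - p) * (2 * α - 1)
        + 3 * p * (2 * α - 1) * (uu q 0 0 + uu q 1 0));
     a ^ 2 * Real.sqrt 3 / 16 * (3 * (tt q 0 0 + tt q 1 0 + tt q 0 1 + tt q 1 1)
        + 2 * p * (vv q 0 0 + vv q 1 0)),
     3 * a ^ 2 / 16 * ((uu q 0 0 + uu q 1 0 + uu q 0 1 + uu q 1 1)
        - ((vv q 0 0) ^ 2 + (vv q 1 0) ^ 2 + (vv q 0 1) ^ 2 + (vv q 1 1) ^ 2)),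
     -(a * h * Real.sqrt 3 / 8) * (p * (2 * α - 1) * (vv q 0 0 + vv q 1 0));
     a * h / 8 * (-4 * p * (1 - p) * (2 * α - 1)
        + 3 * p * (2 * α - 1) * (uu q 0 0 + uu q 1 0)),
     -(a * h * Real.sqrt 3 / 8) * (p * (2 * α - 1) * (vv q 0 0 + vv q 1 0)),
     h ^ 2 * p / 2 * (1 - p * (2 * α - 1) ^ 2)]

/-- The matrix `γ` of the RWG. -/
def gammaG (a h p α : ℝ) (q : Fin 2 → Fin 2 → Fin 3 → ℝ) : Matrix (Fin 3) (Fin 3) ℝ :=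
  !![a ^ 2 / 4 * (2 * p * (1 - p) + 9 / 4 * (ss q 0 0 + ss q 1 0 - ss q 0 1 - ss q 1 1)
        - 3 * p * (uu q 0 0 + uu q 1 0)),
     a ^ 2 * Real.sqrt 3 / 16 * (3 * (tt q 0 0 + tt q 1 0 - tt q 0 1 - tt q 1 1)
        + 2 * p * (vv q 0 0 + vv q 1 0)),
     a * h / 8 * (-4 * p * (1 - p) * (2 * α - 1)
        + 3 * p * (2 * α - 1) * (uu q 0 0 + uu q 1 0));
     a ^ 2 * Real.sqrt 3 / 16 * (3 * (tt q 0 0 + tt q 1 0 - tt q 0 1 - tt q 1 1)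
        + 2 * p * (vv q 0 0 + vv q 1 0)),
     3 * a ^ 2 / 16 * ((uu q 0 0 + uu q 1 0 - uu q 0 1 - uu q 1 1)
        - ((vv q 0 0) ^ 2 + (vv q 1 0) ^ 2 - (vv q 0 1) ^ 2 - (vv q 1 1) ^ 2)),
     -(a * h * Real.sqrt 3 / 8) * (p * (2 * α - 1) * (vv q 0 0 + vv q 1 0));
     a * h / 8 * (-4 * p * (1 - p) * (2 * α - 1)
        + 3 * p * (2 * α - 1) * (uu q 0 0 + uu q 1 0)),
     -(a * h * Real.sqrt 3 / 8) * (p * (2 * α - 1) * (vv q 0 0 + vv q 1 0)),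
     h ^ 2 * p / 2 * (1 - p * (2 * α - 1) ^ 2)]

/-- The matrix `δ` of the RWG. -/
def deltaG (a h p α : ℝ) (q : Fin 2 → Fin 2 → Fin 3 → ℝ) : Matrix (Fin 3) (Fin 3) ℝ :=
  !![a ^ 2 / 4 * (9 / 4 * (ss q 0 0 - ss q 1 0 - ss q 0 1 + ss q 1 1)
        - 3 * p * (uu q 0 0 - uu q 1 0)),
     a ^ 2 * Real.sqrt 3 / 16 * (3 * (tt q 0 0 - tt q 1 0 - tt q 0 1 + tt q 1 1)
        + 2 * p * (vv q 0 0 - vv q 1 0)),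
     a * h / 8 * (3 * p * (2 * α - 1) * (uu q 0 0 - uu q 1 0));
     a ^ 2 * Real.sqrt 3 / 16 * (3 * (tt q 0 0 - tt q 1 0 - tt q 0 1 + tt q 1 1)
        + 2 * p * (vv q 0 0 - vv q 1 0)),
     3 * a ^ 2 / 16 * ((uu q 0 0 - uu q 1 0 - uu q 0 1 + uu q 1 1)
        - ((vv q 0 0) ^ 2 - (vv q 1 0) ^ 2 - (vv q 0 1) ^ 2 + (vv q 1 1) ^ 2)),
     -(a * h * Real.sqrt 3 / 8) * (p * (2 * α - 1) * (vv q 0 0 - vv q 1 0));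
     a * h / 8 * (3 * p * (2 * α - 1) * (uu q 0 0 - uu q 1 0)),
     -(a * h * Real.sqrt 3 / 8) * (p * (2 * α - 1) * (vv q 0 0 - vv q 1 0)),
     0]

/-- A probability measure on `ℝ³` is the centered Gaussian law with covariance matrix `Γ`
if every linear functional pushes it to the corresponding one-dimensional Gaussian law. -/
def IsCenteredGaussian (G : Measure E) (Γ : Matrix (Fin 3) (Fin 3) ℝ) : Prop :=
  IsProbabilityMeasure G ∧
    ∀ u : Fin 3 → ℝ, G.map (fun x => ∑ r, u r * x r) =
      gaussianReal 0 (Real.toNNReal (∑ r, ∑ c, u r * Γ r c * u c))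

/-- View a point of `ℝ³` as a plain function on indices. -/
def toFun (x : E) : Fin 3 → ℝ := x

end RWG

section BoundedIncrements

/-- One step of the exponential-moment estimate behind Azuma's inequality. -/
lemma integral_exp_mul_le_of_condExp_sub_eq_zero {Ω : Type*} {F m : MeasurableSpace Ω}
    {P : Measure Ω} [IsProbabilityMeasure P] (hF : F ≤ m) {X Y : Ω → ℝ} {K B t : ℝ}
    (hK : 0 < K) (hX : Measurable[F] X) (hY : Measurable Y)
    (hXB : ∀ᵐ ω ∂P, |X ω| ≤ B) (hinc : ∀ᵐ ω ∂P, |Y ω - X ω| ≤ K)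
    (hce : P[fun ω => Y ω - X ω|F] =ᵐ[P] 0) :
    ∫ ω, exp (t * Y ω) ∂P ≤ exp (t ^ 2 * K ^ 2 / 2) * ∫ ω, exp (t * X ω) ∂P := by
  have hXm : Measurable X := hX.mono hF le_rfl
  have hbdd : ∀ᵐ ω ∂P, ‖exp (t * X ω)‖ ≤ exp (|t| * B) := by
    filter_upwards [hXB] with ω hω
    rw [Real.norm_eq_abs, abs_exp, exp_le_exp]
    calc t * X ω ≤ |t * X ω| := le_abs_self _
      _ = |t| * |X ω| := abs_mul _ _
      _ ≤ |t| * B := by gcongr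
  have hZi : Integrable (fun ω => exp (t * X ω)) P :=
    Integrable.of_bound (by fun_prop) _ hbdd
  have hDi : Integrable (fun ω => Y ω - X ω) P :=
    Integrable.of_bound (by fun_prop) K (by simpa [Real.norm_eq_abs] using hinc)
  have hZD : Integrable (fun ω => exp (t * X ω) * (Y ω - X ω)) P :=
    hDi.bdd_mul (by fun_prop) hbdd
  have hzero : ∫ ω, exp (t * X ω) * (Y ω - X ω) ∂P = 0 := by
    have hsm : StronglyMeasurable[F] (fun ω => exp (t * X ω)) :=
      (measurable_exp.comp (hX.const_mul t)).stronglyMeasurable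
    have hpull := condExp_mul_of_stronglyMeasurable_left hsm hZD hDi
    rw [← integral_condExp hF]
    refine integral_eq_zero_of_ae ?_
    filter_upwards [hpull, hce] with ω h1 h2
    have : (P[(fun ω => exp (t * X ω)) * (fun ω => Y ω - X ω)|F]) ω = 0 := by
      rw [h1, Pi.mul_apply, h2]; simp
    exact this
  have hpt : ∀ᵐ ω ∂P, exp (t * Y ω) ≤
      cosh (t * K) * exp (t * X ω) + sinh (t * K) / K * (exp (t * X ω) * (Y ω - X ω)) := by
    filter_upwards [hinc] with ω hω
    have h1 : |(Y ω - X ω) / K| ≤ 1 := by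
      rw [abs_div, abs_of_pos hK]; exact (div_le_one hK).2 hω
    have h2 := Real.exp_mul_le_cosh_add_mul_sinh h1 (t * K)
    have h3 : (Y ω - X ω) / K * (t * K) = t * Y ω - t * X ω := by field_simp
    rw [h3, exp_sub, div_le_iff₀ (exp_pos _)] at h2
    refine h2.trans (le_of_eq ?_)
    field_simp
  calc ∫ ω, exp (t * Y ω) ∂P
      ≤ ∫ ω, (cosh (t * K) * exp (t * X ω) +
          sinh (t * K) / K * (exp (t * X ω) * (Y ω - X ω))) ∂P :=
        integral_mono_of_nonneg (Eventually.of_forall fun ω => (exp_pos (t * Y ω)).le)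
          ((hZi.const_mul _).add (hZD.const_mul _)) hpt
    _ = cosh (t * K) * ∫ ω, exp (t * X ω) ∂P := by
        rw [integral_add (hZi.const_mul _) (hZD.const_mul _), integral_const_mul,
          integral_const_mul, hzero]
        ring
    _ ≤ exp (t ^ 2 * K ^ 2 / 2) * ∫ ω, exp (t * X ω) ∂P := by
        gcongr
        rw [← mul_pow]; exact Real.cosh_le_exp_half_sq _

variable {Ω : Type*} {m : MeasurableSpace Ω} {P : Measure Ω}
  {F : ℕ → MeasurableSpace Ω} {Y : ℕ → Ω → ℝ} {K : ℝ}

lemma ae_abs_le_of_ae_abs_sub_le (h0 : ∀ ω, Y 0 ω = 0)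
    (hinc : ∀ n, ∀ᵐ ω ∂P, |Y (n + 1) ω - Y n ω| ≤ K) (n : ℕ) :
    ∀ᵐ ω ∂P, |Y n ω| ≤ n * K := by
  induction n with
  | zero => exact .of_forall fun ω => by simp [h0]
  | succ n ih =>
    filter_upwards [ih, hinc n] with ω h1 h2
    have := abs_add_le (Y (n + 1) ω - Y n ω) (Y n ω)
    rw [sub_add_cancel] at this
    push_cast
    linarith

/-- Azuma's inequality in exponential-moment form. -/
lemma integral_exp_mul_le_of_bounded_increments [IsProbabilityMeasure P] (hF : ∀ n, F n ≤ m)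
    (hK : 0 < K) (hY : ∀ n, Measurable[F n] (Y n)) (h0 : ∀ ω, Y 0 ω = 0)
    (hinc : ∀ n, ∀ᵐ ω ∂P, |Y (n + 1) ω - Y n ω| ≤ K)
    (hce : ∀ n, P[fun ω => Y (n + 1) ω - Y n ω|F n] =ᵐ[P] 0) (t : ℝ) (n : ℕ) :
    ∫ ω, exp (t * Y n ω) ∂P ≤ exp (n * (t ^ 2 * K ^ 2 / 2)) := by
  induction n with
  | zero => simp [h0]
  | succ n ih =>
    refine (integral_exp_mul_le_of_condExp_sub_eq_zero (hF n) hK (hY n)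
      ((hY (n + 1)).mono (hF _) le_rfl) (ae_abs_le_of_ae_abs_sub_le h0 hinc n)
      (hinc n) (hce n)).trans ?_
    calc _ ≤ exp (t ^ 2 * K ^ 2 / 2) * exp (n * (t ^ 2 * K ^ 2 / 2)) := by gcongr
      _ = _ := by rw [← exp_add]; push_cast; ring_nf

lemma ae_eventually_lt_of_bounded_increments [IsProbabilityMeasure P] (hF : ∀ n, F n ≤ m)
    (hK : 0 < K) (hY : ∀ n, Measurable[F n] (Y n)) (h0 : ∀ ω, Y 0 ω = 0)
    (hinc : ∀ n, ∀ᵐ ω ∂P, |Y (n + 1) ω - Y n ω| ≤ K)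
    (hce : ∀ n, P[fun ω => Y (n + 1) ω - Y n ω|F n] =ᵐ[P] 0) :
    ∀ᵐ ω ∂P, ∀ᶠ n : ℕ in atTop, Y n ω < 2 * K * √(n * log n) := by
  have htail : ∀ n : ℕ, 0 < n →
      P.real {ω | 2 * K * √(n * log n) ≤ Y n ω} ≤ 1 / (n : ℝ) ^ 2 := by
    intro n hn
    have hn' : (1 : ℝ) ≤ n := by exact_mod_cast hn
    have hn0 : (0 : ℝ) < n := by linarith
    have hlog : 0 ≤ log n := log_nonneg hn'
    set t : ℝ := 2 * √(log n / n) / K with ht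
    have ht0 : 0 ≤ t := by positivity
    have hint : Integrable (fun ω => exp (t * Y n ω)) P := by
      refine Integrable.of_bound (C := exp (t * (n * K))) ?_ ?_
      · have := (hY n).mono (hF n) le_rfl
        fun_prop
      · filter_upwards [ae_abs_le_of_ae_abs_sub_le h0 hinc n] with ω hω
        rw [Real.norm_eq_abs, abs_exp, exp_le_exp]
        exact mul_le_mul_of_nonneg_left ((le_abs_self _).trans hω) ht0
    refine (measure_ge_le_exp_mul_mgf _ ht0 hint).trans ?_
    have hmul : √(log n / n) * √(n * log n) = log n := by
      rw [← sqrt_mul (by positivity), show log n / n * (n * log n) = log n ^ 2 by field_simp,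
        sqrt_sq hlog]
    have hsq : √(log n / n) ^ 2 = log n / n := sq_sqrt (by positivity)
    calc _ ≤ exp (-t * (2 * K * √(n * log n))) * exp (n * (t ^ 2 * K ^ 2 / 2)) := by
          gcongr
          exact integral_exp_mul_le_of_bounded_increments hF hK hY h0 hinc hce t n
      _ = exp (-(2 * log n)) := by
          rw [← exp_add]
          congr 1
          have e1 : t * (2 * K * √(n * log n)) = 4 * log n := by
            rw [show t * (2 * K * √(n * log n)) = 4 * (√(log n / n) * √(n * log n)) by
              rw [ht]; field_simp; ring, hmul]
          have e2 : n * (t ^ 2 * K ^ 2 / 2) = 2 * log n := by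
            rw [ht, div_pow, mul_pow, hsq]; field_simp
          rw [neg_mul, e1, e2]; ring
      _ = 1 / (n : ℝ) ^ 2 := by
          rw [exp_neg, two_mul, exp_add, exp_log hn0, one_div, sq]
  have hsum : ∑' n : ℕ, P {ω | 2 * K * √(n * log n) ≤ Y n ω} ≠ ⊤ := by
    have hs : Summable fun n : ℕ => P.real {ω | 2 * K * √(n * log n) ≤ Y n ω} := by
      refine Summable.of_norm_bounded_eventually_nat (g := fun n : ℕ => 1 / (n : ℝ) ^ 2)
        (Real.summable_one_div_nat_pow.2 one_lt_two) ?_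
      filter_upwards [eventually_gt_atTop 0] with n hn
      rw [Real.norm_of_nonneg measureReal_nonneg]
      exact htail n hn
    have := hs.tsum_ofReal_ne_top
    simpa [ofReal_measureReal] using this
  filter_upwards [ae_eventually_notMem hsum] with ω hω
  filter_upwards [hω] with n hn
  simpa using hn

/-- A martingale with bounded increments is almost surely `O(√(n log n))`. -/
lemma ae_eventually_sq_le_of_bounded_increments [IsProbabilityMeasure P] (hF : ∀ n, F n ≤ m)
    (hK : 0 < K) (hY : ∀ n, Measurable[F n] (Y n)) (h0 : ∀ ω, Y 0 ω = 0)
    (hinc : ∀ n, ∀ᵐ ω ∂P, |Y (n + 1) ω - Y n ω| ≤ K)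
    (hce : ∀ n, P[fun ω => Y (n + 1) ω - Y n ω|F n] =ᵐ[P] 0) :
    ∀ᵐ ω ∂P, ∀ᶠ n : ℕ in atTop, Y n ω ^ 2 ≤ 4 * K ^ 2 * (n * log n) := by
  have hneg := ae_eventually_lt_of_bounded_increments (P := P) (Y := fun n ω => -Y n ω) hF hK
    (fun n => (hY n).neg) (by simpa using h0)
    (fun n => by
      filter_upwards [hinc n] with ω hω
      rwa [← abs_neg, show -(-Y (n + 1) ω - -Y n ω) = Y (n + 1) ω - Y n ω by ring])
    (fun n => by
      have e : (fun ω => -Y (n + 1) ω - -Y n ω) = -(fun ω => Y (n + 1) ω - Y n ω) := by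
        ext ω; simp; ring
      rw [e]
      filter_upwards [condExp_neg (μ := P) (fun ω => Y (n + 1) ω - Y n ω) (F n), hce n]
        with ω h1 h2
      rw [h1, Pi.neg_apply, h2]; simp)
  filter_upwards [ae_eventually_lt_of_bounded_increments hF hK hY h0 hinc hce, hneg]
    with ω h1 h2
  filter_upwards [h1, h2, eventually_ge_atTop 1] with n h1 h2 hn
  have hn' : (1 : ℝ) ≤ n := by exact_mod_cast hn
  have hlog : 0 ≤ n * log n := mul_nonneg (by linarith) (log_nonneg hn')
  calc Y n ω ^ 2 ≤ (2 * K * √(n * log n)) ^ 2 := sq_le_sq' (by linarith) h1.le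
    _ = 4 * K ^ 2 * (n * log n) := by rw [mul_pow, sq_sqrt hlog]; ring

end BoundedIncrements

namespace RWG

section Lattice

@[simp] lemma vec_apply_zero (x y z : ℝ) : vec x y z 0 = x := rfl
@[simp] lemma vec_apply_one (x y z : ℝ) : vec x y z 1 = y := rfl
@[simp] lemma vec_apply_two (x y z : ℝ) : vec x y z 2 = z := rfl

/-- The horizontal offset of the vertices of type `(i, j)`, in units of `a`. -/
def offset (i j : Fin 2) : ℤ := if j = 1 then (if i = 0 then -1 else 1) else 0

/-- The parity of the layers containing the vertices of type `(i, j)`. -/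
def layer (i j : Fin 2) : ℤ := if i ≠ j then 1 else 0

lemma mem_V_iff {a h : ℝ} {i j : Fin 2} {x : E} :
    x ∈ V a h i j ↔ ∃ k l n : ℤ, x 0 = a * (offset i j + 3 / 2 * k) ∧
      x 1 = a * (√3 / 2 * k + √3 * l) ∧ x 2 = h * (2 * n + layer i j) := by
  have hoff : ((offset i j : ℤ) : ℝ) =
      (-1 : ℝ) ^ ((i : ℕ) + 1) * (if j = 1 then (1 : ℝ) else 0) := by
    fin_cases i <;> fin_cases j <;> simp [offset]
  have hlay : ((layer i j : ℤ) : ℝ) = if i ≠ j then (1 : ℝ) else 0 := by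
    unfold layer; split_ifs <;> simp
  rw [hoff, hlay]
  constructor
  · rintro ⟨k, l, n, rfl⟩
    exact ⟨k, l, n, rfl, rfl, rfl⟩
  · rintro ⟨k, l, n, h0, h1, h2⟩
    refine ⟨k, l, n, ?_⟩
    ext r
    fin_cases r
    exacts [h0, h1, h2]

lemma eq_of_mem_V_of_mem_V {a h : ℝ} (ha : 0 < a) (hh : 0 < h) {i j i' j' : Fin 2} {x : E}
    (hx : x ∈ V a h i j) (hx' : x ∈ V a h i' j') : i = i' ∧ j = j' := by
  obtain ⟨k, l, n, h0, -, h2⟩ := mem_V_iff.1 hx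
  obtain ⟨k', l', n', h0', -, h2'⟩ := mem_V_iff.1 hx'
  have e0 := mul_left_cancel₀ ha.ne' (h0.symm.trans h0')
  have e2 := mul_left_cancel₀ hh.ne' (h2.symm.trans h2')
  have z0 : 2 * offset i j + 3 * k = 2 * offset i' j' + 3 * k' := by
    have : (2 * offset i j + 3 * k : ℝ) = 2 * offset i' j' + 3 * k' := by linarith
    exact_mod_cast this
  have z2 : 2 * n + layer i j = 2 * n' + layer i' j' := by
    have : (2 * n + layer i j : ℝ) = 2 * n' + layer i' j' := e2
    exact_mod_cast this
  clear e0 e2 h0 h2 h0' h2' hx hx'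
  fin_cases i <;> fin_cases j <;> fin_cases i' <;> fin_cases j' <;>
    simp [offset, layer] at z0 z2 ⊢ <;> omega

lemma countable_V (a h : ℝ) (i j : Fin 2) : (V a h i j).Countable := by
  refine (countable_range (fun t : ℤ × ℤ × ℤ =>
    vec (a * ((-1 : ℝ) ^ ((i : ℕ) + 1) * (if j = 1 then (1 : ℝ) else 0) + (3 / 2) * t.1))
        (a * ((Real.sqrt 3 / 2) * t.1 + Real.sqrt 3 * t.2.1))
        (h * (2 * t.2.2 + (if i ≠ j then (1 : ℝ) else 0))))).mono ?_
  rintro x ⟨k, l, n, rfl⟩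
  exact ⟨(k, l, n), rfl⟩

lemma cos_four_pi_div_three : cos (4 * π / 3) = -1 / 2 := by
  rw [show 4 * π / 3 = π / 3 + π by ring, cos_add_pi, cos_pi_div_three]; ring

lemma sin_four_pi_div_three : sin (4 * π / 3) = -(√3 / 2) := by
  rw [show 4 * π / 3 = π / 3 + π by ring, sin_add_pi, sin_pi_div_three]

lemma cos_two_pi_div_three : cos (2 * π / 3) = -1 / 2 := by
  rw [show 2 * π / 3 = π - π / 3 by ring, cos_pi_sub, cos_pi_div_three]; ring

lemma sin_two_pi_div_three : sin (2 * π / 3) = √3 / 2 := by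
  rw [show 2 * π / 3 = π - π / 3 by ring, sin_pi_sub, sin_pi_div_three]

lemma w_eq (a : ℝ) (i : Fin 2) (k : Fin 3) :
    w a i k = vec (a * ((-1) ^ (i : ℕ) * ![1, -1 / 2, -1 / 2] k))
      (a * ((-1) ^ (i : ℕ) * ![0, √3 / 2, -(√3 / 2)] k)) 0 := by
  have h4 : (2 * 2 * π / 3 : ℝ) = 4 * π / 3 := by ring
  fin_cases i <;> fin_cases k <;>
    simp [w, cos_add_pi, sin_add_pi, h4, cos_four_pi_div_three, sin_four_pi_div_three,
      cos_two_pi_div_three, sin_two_pi_div_three]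

lemma add_w_mem_V {a h : ℝ} {i j : Fin 2} {x : E} (hx : x ∈ V a h i j) (k : Fin 3) :
    x + w a i k ∈ V a h (1 - i) (1 - j) := by
  obtain ⟨m, l, n, h0, h1, h2⟩ := mem_V_iff.1 hx
  refine mem_V_iff.2 ⟨m + (if k = 0 then 0 else if i = 0 then -1 else 1),
    l + (if k = 1 then (if i = 0 then 1 else -1) else 0), n, ?_, ?_, ?_⟩
  · rw [PiLp.add_apply, h0, w_eq, vec_apply_zero]
    fin_cases i <;> fin_cases j <;> fin_cases k <;> simp [offset] <;> ring
  · rw [PiLp.add_apply, h1, w_eq, vec_apply_one]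
    fin_cases i <;> fin_cases k <;> simp <;> ring
  · rw [PiLp.add_apply, h2, w_eq, vec_apply_two]
    fin_cases i <;> fin_cases j <;> simp [layer]

lemma add_vertical_mem_V {a h : ℝ} {i : Fin 2} {x : E} (hx : x ∈ V a h i 0) :
    x + vec 0 0 h ∈ V a h (1 - i) 0 ∧ x + vec 0 0 (-h) ∈ V a h (1 - i) 0 := by
  obtain ⟨m, l, n, h0, h1, h2⟩ := mem_V_iff.1 hx
  constructor
  · refine mem_V_iff.2 ⟨m, l, n + (if i = 0 then 0 else 1), ?_, ?_, ?_⟩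
    · simpa [offset] using h0
    · simpa using h1
    · rw [PiLp.add_apply, h2, vec_apply_two]
      fin_cases i <;> simp [layer] <;> ring
  · refine mem_V_iff.2 ⟨m, l, n + (if i = 0 then -1 else 0), ?_, ?_, ?_⟩
    · simpa [offset] using h0
    · simpa using h1
    · rw [PiLp.add_apply, h2, vec_apply_two]
      fin_cases i <;> simp [layer] <;> ring

lemma norm_vec (x y z : ℝ) : ‖vec x y z‖ = √(x ^ 2 + y ^ 2 + z ^ 2) := by
  simp [EuclideanSpace.norm_eq, Fin.sum_univ_three]

lemma norm_w {a : ℝ} (ha : 0 < a) (i : Fin 2) (k : Fin 3) : ‖w a i k‖ = a := by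
  rw [w, norm_vec, mul_pow, mul_pow, ← mul_add, cos_sq_add_sin_sq]
  simp [sqrt_sq ha.le]

lemma norm_vertical (z : ℝ) : ‖vec 0 0 z‖ = |z| := by
  rw [norm_vec]; simp [sqrt_sq_eq_abs]

end Lattice

section Transition

/-- The mean of `f` after one step of the walk from the vertex `x` of type `(i, j)`. -/
def stepMean (a h p α : ℝ) (q : Fin 2 → Fin 2 → Fin 3 → ℝ) (i j : Fin 2)
    (f : E → ℝ) (x : E) : ℝ :=
  (if j = 0 then α * p * f (x + vec 0 0 h) + (1 - α) * p * f (x + vec 0 0 (-h)) else 0) +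
    ∑ k : Fin 3, q i j k * f (x + w a i k)

/-- The function which is constant equal to `G i j` on the vertices of type `(i, j)`. -/
def typeFun (a h : ℝ) (G : Fin 2 → Fin 2 → ℝ) (x : E) : ℝ :=
  ∑ i, ∑ j, (V a h i j).indicator (fun _ => G i j) x

/-- A solution `G` of the Poisson equation, in terms of the drifts `d i j` and the speed `c`. -/
def corrector (p c : ℝ) (d : Fin 2 → Fin 2 → ℝ) : Fin 2 → Fin 2 → ℝ :=
  let g := (d 0 0 + (1 - p) * d 1 1 - c * (2 - p)) / p
  ![![g, d 0 1 - c], ![0, g + d 1 1 - c]]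

variable {a h p α : ℝ} {q : Fin 2 → Fin 2 → Fin 3 → ℝ}

lemma measurable_typeFun (a h : ℝ) (G : Fin 2 → Fin 2 → ℝ) : Measurable (typeFun a h G) :=
  Finset.measurable_fun_sum _ fun i _ => Finset.measurable_fun_sum _ fun j _ =>
    measurable_const.indicator (countable_V a h i j).measurableSet

lemma abs_typeFun_le (a h : ℝ) (G : Fin 2 → Fin 2 → ℝ) (x : E) :
    |typeFun a h G x| ≤ ∑ i, ∑ j, |G i j| := by
  refine (Finset.abs_sum_le_sum_abs _ _).trans (Finset.sum_le_sum fun i _ => ?_)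
  refine (Finset.abs_sum_le_sum_abs _ _).trans (Finset.sum_le_sum fun j _ => ?_)
  by_cases hx : x ∈ V a h i j <;> simp [hx]

lemma typeFun_of_mem (ha : 0 < a) (hh : 0 < h) (G : Fin 2 → Fin 2 → ℝ) {i j : Fin 2} {x : E}
    (hx : x ∈ V a h i j) : typeFun a h G x = G i j := by
  have hz : ∀ i' j', ¬(i = i' ∧ j = j') →
      (V a h i' j').indicator (fun _ => G i' j') x = 0 := fun i' j' hne =>
    indicator_of_notMem (fun hx' => hne (eq_of_mem_V_of_mem_V ha hh hx hx')) _
  unfold typeFun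
  rw [Finset.sum_eq_single i, Finset.sum_eq_single j, indicator_of_mem hx]
  · exact fun j' _ hj => hz i j' fun h' => hj h'.2.symm
  · simp
  · exact fun i' _ hi => Finset.sum_eq_zero fun j' _ => hz i' j' fun h' => hi h'.1.symm
  · simp

lemma sum_weights (hq0 : ∀ i, q i 0 0 + q i 0 1 + q i 0 2 = 1 - p)
    (hq1 : ∀ i, q i 1 0 + q i 1 1 + q i 1 2 = 1) (i j : Fin 2) :
    q i j 0 + q i j 1 + q i j 2 = if j = 0 then 1 - p else 1 := by
  fin_cases j
  · simpa using hq0 i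
  · simpa using hq1 i

/-- The speed of the walk is the stationary average of the drifts. -/
lemma sum_drift_eq (hp1 : p ≤ 1) (hq0 : ∀ i, q i 0 0 + q i 0 1 + q i 0 2 = 1 - p)
    (hq1 : ∀ i, q i 1 0 + q i 1 1 + q i 1 2 = 1) (r : Fin 3) :
    let d := fun i j => stepMean a h p α q i j (fun y => y r) 0
    d 0 0 + d 1 0 + (1 - p) * (d 1 1 + d 0 1) =
      2 * (2 - p) * (muG a h p α q + (p / (2 - p)) • mG a h p α q) r := by
  have hp2 : 2 - p ≠ 0 := by linarith
  have e00 : q 0 0 0 = 1 - p - q 0 0 1 - q 0 0 2 := by linarith [hq0 0]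
  have e10 : q 1 0 0 = 1 - p - q 1 0 1 - q 1 0 2 := by linarith [hq0 1]
  have e01 : q 0 1 0 = 1 - q 0 1 1 - q 0 1 2 := by linarith [hq1 0]
  have e11 : q 1 1 0 = 1 - q 1 1 1 - q 1 1 2 := by linarith [hq1 1]
  fin_cases r <;>
    simp [stepMean, w_eq, muG, mG, uu, vv, Fin.sum_univ_three, e00, e10, e01, e11] <;>
    field_simp <;> ring

lemma stepMean_add_corrector (ha : 0 < a) (hh : 0 < h) (hp : 0 < p) (hp1 : p ≤ 1)
    (hq0 : ∀ i, q i 0 0 + q i 0 1 + q i 0 2 = 1 - p)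
    (hq1 : ∀ i, q i 1 0 + q i 1 1 + q i 1 2 = 1) (r : Fin 3) {c : ℝ}
    (hc : c = (muG a h p α q + (p / (2 - p)) • mG a h p α q) r) {G : Fin 2 → Fin 2 → ℝ}
    (hG : G = corrector p c fun i j => stepMean a h p α q i j (fun y => y r) 0)
    {i j : Fin 2} {x : E} (hx : x ∈ V a h i j) :
    stepMean a h p α q i j (fun y => y r + typeFun a h G y) x =
      x r + typeFun a h G x + c := by
  set d := fun i j => stepMean a h p α q i j (fun y => y r) 0 with hd
  have hdrift := sum_drift_eq (a := a) (h := h) (α := α) hp1 hq0 hq1 r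
  rw [← hc] at hdrift
  have hw := sum_weights hq0 hq1 i j
  have hsplit : stepMean a h p α q i j (fun y => y r + typeFun a h G y) x =
      x r + d i j + ((if j = 0 then p * G (1 - i) 0 else 0) +
        (if j = 0 then 1 - p else 1) * G (1 - i) (1 - j)) := by
    rw [← hw]
    have hwk : ∀ k, typeFun a h G (x + w a i k) = G (1 - i) (1 - j) := fun k =>
      typeFun_of_mem ha hh G (add_w_mem_V hx k)
    by_cases hj : j = 0
    · subst hj
      rw [if_pos rfl] at hw
      obtain ⟨hu, hl⟩ := add_vertical_mem_V hx
      simp only [hd, stepMean, hwk, typeFun_of_mem ha hh G hu, typeFun_of_mem ha hh G hl,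
        Fin.sum_univ_three, PiLp.add_apply, if_true, zero_add]
      linear_combination x r * hw
    · simp only [hj, if_false] at hw
      simp only [hd, stepMean, hwk, Fin.sum_univ_three, PiLp.add_apply, hj,
        if_false, zero_add]
      linear_combination x r * hw
  rw [hsplit, typeFun_of_mem ha hh G hx]
  simp only at hdrift
  change d 0 0 + d 1 0 + (1 - p) * (d 1 1 + d 0 1) = _ at hdrift
  clear_value d
  subst hG
  fin_cases i <;> fin_cases j <;> simp [corrector] <;> field_simp <;> linarith

end Transition

section Walk

variable {Ω : Type} [mΩ : MeasurableSpace Ω] {P : Measure Ω} {a h p α : ℝ}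
  {q : Fin 2 → Fin 2 → Fin 3 → ℝ} {S : ℕ → Ω → E} {F : ℕ → MeasurableSpace Ω}

namespace IsRWG

lemma filtration_le (hRW : IsRWG P a h p α q S F) (n : ℕ) : F n ≤ mΩ := by
  rw [hRW.hF n]
  refine Measurable.comap_le (measurable_pi_lambda _ fun k => ?_)
  exact (hRW.hSmeas _).sub (hRW.hSmeas _)

lemma measurable_position (hRW : IsRWG P a h p α q S F) (n : ℕ) : Measurable[F n] (S n) := by
  have hinc : Measurable[F n] fun ω (k : Fin n) => S ((k : ℕ) + 1) ω - S (k : ℕ) ω := by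
    rw [hRW.hF n]; exact comap_measurable _
  have hsum : Measurable fun y : Fin n → E => ∑ k, y k := by fun_prop
  have heq : S n = fun ω => ∑ k : Fin n, (S ((k : ℕ) + 1) ω - S (k : ℕ) ω) := by
    ext1 ω
    rw [Fin.sum_univ_eq_sum_range (fun k => S (k + 1) ω - S k ω), Finset.sum_range_sub (S · ω),
      hRW.hS0, sub_zero]
  rw [heq]
  exact hsum.comp hinc

lemma condExp_eq_stepMean (hRW : IsRWG P a h p α q S F) (n : ℕ) {f : E → ℝ} (hf : Measurable f)
    {C : ℝ} (hC : ∀ x, |f x| ≤ C) :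
    ∀ᵐ ω ∂P, ∀ i j, S n ω ∈ V a h i j →
      (P[fun ω => f (S (n + 1) ω)|F n]) ω = stepMean a h p α q i j f (S n ω) := by
  filter_upwards [hRW.hTrans n f hf ⟨C, hC⟩] with ω hω i j hx
  rw [hω]
  have hz : ∀ i' j', ¬(i = i' ∧ j = j') →
      (V a h i' j').indicator (fun _ => (1 : ℝ)) (S n ω) = 0 := fun i' j' hne =>
    indicator_of_notMem (fun hx' => hne (eq_of_mem_V_of_mem_V hRW.ha hRW.hh hx hx')) _
  have h1 : (V a h i j).indicator (fun _ => (1 : ℝ)) (S n ω) = 1 := indicator_of_mem hx _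
  rw [Fin.sum_univ_two]
  fin_cases i <;> fin_cases j <;> simp at h1 <;> simp [h1, hz, stepMean]

lemma ae_exists_mem_V (hRW : IsRWG P a h p α q S F) (n : ℕ) :
    ∀ᵐ ω ∂P, ∃ i j, S n ω ∈ V a h i j := by
  have := hRW.prob
  filter_upwards [hRW.hTrans n (fun _ => 1) measurable_const ⟨1, by simp⟩] with ω hω
  rw [condExp_const (hRW.filtration_le n)] at hω
  by_contra! hne
  simp [hne] at hω

lemma ae_norm_sub_le (hRW : IsRWG P a h p α q S F) (n : ℕ) :
    ∀ᵐ ω ∂P, ‖S (n + 1) ω - S n ω‖ ≤ a + h := by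
  have := hRW.prob
  have hFn := hRW.filtration_le n
  have hpoint : ∀ i j, ∀ x ∈ V a h i j, ∀ᵐ ω ∂P, S n ω = x → ‖S (n + 1) ω - S n ω‖ ≤ a + h := by
    intro i j x hx
    let f : E → ℝ := (Metric.closedBall x (a + h))ᶜ.indicator fun _ => 1
    have hfm : Measurable f :=
      measurable_const.indicator Metric.isClosed_closedBall.measurableSet.compl
    have hf1 : ∀ y, |f y| ≤ 1 := fun y => by
      by_cases hy : y ∈ (Metric.closedBall x (a + h))ᶜ <;> simp [f, hy]
    have hf0 : ∀ y, 0 ≤ f y := fun y => indicator_nonneg (fun _ _ => zero_le_one) y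
    have hnear : ∀ v : E, ‖v‖ ≤ a + h → f (x + v) = 0 := fun v hv =>
      indicator_of_notMem (by simpa [dist_eq_norm] using hv) _
    have hmean : stepMean a h p α q i j f x = 0 := by
      have hw : ∀ k, f (x + w a i k) = 0 := fun k =>
        hnear _ (by rw [norm_w hRW.ha]; linarith [hRW.hh])
      have hu : f (x + vec 0 0 h) = 0 :=
        hnear _ (by rw [norm_vertical, abs_of_pos hRW.hh]; linarith [hRW.ha])
      have hl : f (x + vec 0 0 (-h)) = 0 :=
        hnear _ (by rw [norm_vertical, abs_neg, abs_of_pos hRW.hh]; linarith [hRW.ha])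
      simp [stepMean, hw, hu, hl]
    have hs : MeasurableSet[F n] {ω | S n ω = x} :=
      hRW.measurable_position n (measurableSet_singleton x)
    have hfi : Integrable (fun ω => f (S (n + 1) ω)) P :=
      Integrable.of_bound (hfm.comp (hRW.hSmeas _)).aestronglyMeasurable 1
        (.of_forall fun ω => hf1 _)
    have hint : ∫ ω in {ω | S n ω = x}, f (S (n + 1) ω) ∂P = 0 := by
      rw [← setIntegral_condExp hFn hfi hs]
      refine setIntegral_eq_zero_of_ae_eq_zero ?_
      filter_upwards [hRW.condExp_eq_stepMean n hfm hf1] with ω hω hmem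
      have hSx : S n ω = x := hmem
      rw [hω i j (hSx ▸ hx), hSx, hmean]
    rw [integral_eq_zero_iff_of_nonneg (fun _ => hf0 _) hfi.integrableOn] at hint
    filter_upwards [(ae_restrict_iff' (hFn _ hs)).1 hint] with ω hω hSx
    have hzero : f (S (n + 1) ω) = 0 := hω hSx
    by_contra hfar
    have : f (S (n + 1) ω) = 1 := indicator_of_mem (by simpa [dist_eq_norm, hSx] using hfar) _
    linarith
  have hall : ∀ i j, ∀ᵐ ω ∂P, ∀ x ∈ V a h i j, S n ω = x → ‖S (n + 1) ω - S n ω‖ ≤ a + h :=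
    fun i j => (ae_ball_iff (countable_V a h i j)).2 (hpoint i j)
  filter_upwards [hRW.ae_exists_mem_V n, ae_all_iff.2 fun i => ae_all_iff.2 (hall i)] with ω hV hω
  obtain ⟨i, j, hx⟩ := hV
  exact hω i j _ hx rfl

lemma ae_norm_le (hRW : IsRWG P a h p α q S F) (n : ℕ) :
    ∀ᵐ ω ∂P, ‖S n ω‖ ≤ n * (a + h) := by
  induction n with
  | zero => exact .of_forall fun ω => by simp [hRW.hS0]
  | succ n ih =>
    filter_upwards [ih, hRW.ae_norm_sub_le n] with ω h1 h2
    have := norm_add_le (S (n + 1) ω - S n ω) (S n ω)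
    rw [sub_add_cancel] at this
    push_cast
    linarith

lemma stepMean_congr (hRW : IsRWG P a h p α q S F) {f g : E → ℝ} {x : E}
    (hfg : ∀ v : E, ‖v‖ ≤ a + h → f (x + v) = g (x + v)) (i j : Fin 2) :
    stepMean a h p α q i j f x = stepMean a h p α q i j g x := by
  have hw : ∀ k, f (x + w a i k) = g (x + w a i k) := fun k =>
    hfg _ (by rw [norm_w hRW.ha]; linarith [hRW.hh])
  have hu : f (x + vec 0 0 h) = g (x + vec 0 0 h) :=
    hfg _ (by rw [norm_vertical, abs_of_pos hRW.hh]; linarith [hRW.ha])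
  have hl : f (x + vec 0 0 (-h)) = g (x + vec 0 0 (-h)) :=
    hfg _ (by rw [norm_vertical, abs_neg, abs_of_pos hRW.hh]; linarith [hRW.ha])
  simp [stepMean, hw, hu, hl]

/-- Each coordinate of the centred walk is almost surely `O(√(n log n))`, up to a bounded term. -/
lemma exists_ae_eventually_sq_le (hRW : IsRWG P a h p α q S F) (hp : 0 < p) (r : Fin 3) :
    ∃ C > 0, ∀ᵐ ω ∂P, ∀ᶠ n : ℕ in atTop,
      (S n ω r - n * (muG a h p α q + (p / (2 - p)) • mG a h p α q) r) ^ 2 ≤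
        C * (n * log n + 1) := by
  have := hRW.prob
  set c := (muG a h p α q + (p / (2 - p)) • mG a h p α q) r with hc
  set G := corrector p c fun i j => stepMean a h p α q i j (fun y => y r) 0 with hG
  set g := typeFun a h G with hg
  set B := ∑ i, ∑ j, |G i j| with hB
  have hgB : ∀ x, |g x| ≤ B := abs_typeFun_le a h G
  have hB0 : 0 ≤ B := (abs_nonneg _).trans (hgB 0)
  have hgm : Measurable g := measurable_typeFun a h G
  have hah : 0 < a + h := add_pos hRW.ha hRW.hh
  have hcoord : ∀ x : E, |x r| ≤ ‖x‖ := fun x => PiLp.norm_apply_le x r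
  have hrm : Measurable fun y : E => y r := by fun_prop
  set K := a + h + 2 * B + |c| with hK
  have hK0 : 0 < K := by positivity
  let Y : ℕ → Ω → ℝ := fun n ω => S n ω r + g (S n ω) - n * c - g 0
  have hY : ∀ n, Measurable[F n] (Y n) := fun n =>
    ((((hrm.add hgm).sub_const (n * c)).sub_const (g 0))).comp (hRW.measurable_position n)
  have hY0 : ∀ ω, Y 0 ω = 0 := fun ω => by simp [Y, hRW.hS0]
  have hinc : ∀ n, ∀ᵐ ω ∂P, |Y (n + 1) ω - Y n ω| ≤ K := fun n => by
    filter_upwards [hRW.ae_norm_sub_le n] with ω hω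
    have h1 := (hcoord _).trans hω
    rw [PiLp.sub_apply] at h1
    have e : Y (n + 1) ω - Y n ω =
        (S (n + 1) ω r - S n ω r) + g (S (n + 1) ω) - g (S n ω) - c := by
      simp only [Y]; push_cast; ring
    rw [e, abs_le]
    have h2 := abs_le.1 (hgB (S (n + 1) ω))
    have h3 := abs_le.1 (hgB (S n ω))
    have h4 := abs_le.1 (le_refl |c|)
    have h5 := abs_le.1 h1
    constructor <;> linarith
  have hce : ∀ n, P[fun ω => Y (n + 1) ω - Y n ω|F n] =ᵐ[P] 0 := fun n => by
    have hFn := hRW.filtration_le n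
    set L := (n + 1) * (a + h) + B with hL
    have hL0 : 0 ≤ L := by positivity
    let f : E → ℝ := fun y => max (-L) (min L (y r + g y))
    have hfm : Measurable f := measurable_const.max (measurable_const.min (hrm.add hgm))
    have hfL : ∀ y, |f y| ≤ L := fun y =>
      abs_le.2 ⟨le_max_left _ _, max_le (by linarith) (min_le_left _ _)⟩
    have hfeq : ∀ y : E, ‖y‖ ≤ (n + 1) * (a + h) → f y = y r + g y := fun y hy => by
      have h1 : |y r + g y| ≤ L :=
        (abs_add_le _ _).trans (add_le_add ((hcoord y).trans hy) (hgB y))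
      rw [abs_le] at h1
      simp only [f]
      rw [min_eq_right h1.2, max_eq_right h1.1]
    let φ : E → ℝ := fun x => x r + g x + c
    have hφm : Measurable[F n] fun ω => φ (S n ω) :=
      ((hrm.add hgm).add_const c).comp (hRW.measurable_position n)
    have hφi : Integrable (fun ω => φ (S n ω)) P := by
      refine Integrable.of_bound (C := n * (a + h) + B + |c|)
        (hφm.mono hFn le_rfl).aestronglyMeasurable ?_
      filter_upwards [hRW.ae_norm_le n] with ω hω
      refine (norm_add_le _ _).trans (add_le_add ((norm_add_le _ _).trans ?_) le_rfl)
      exact add_le_add ((hcoord _).trans hω) (hgB _)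
    have hfi : Integrable (fun ω => f (S (n + 1) ω)) P :=
      Integrable.of_bound (hfm.comp (hRW.hSmeas _)).aestronglyMeasurable L
        (.of_forall fun ω => hfL _)
    have hcongr : (fun ω => Y (n + 1) ω - Y n ω) =ᵐ[P]
        (fun ω => f (S (n + 1) ω)) - fun ω => φ (S n ω) := by
      filter_upwards [hRW.ae_norm_le (n + 1)] with ω hω
      push_cast at hω
      rw [Pi.sub_apply, hfeq _ hω]
      simp only [Y, φ]
      push_cast
      ring
    have hsub := condExp_sub hfi hφi (F n)
    have hself := condExp_of_stronglyMeasurable hFn hφm.stronglyMeasurable hφi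
    filter_upwards [condExp_congr_ae (m := F n) hcongr, hsub, hRW.condExp_eq_stepMean n hfm hfL,
      hRW.ae_norm_le n, hRW.ae_exists_mem_V n] with ω h1 h2 h3 h4 ⟨i, j, hx⟩
    rw [h1, h2, Pi.sub_apply, hself, h3 i j hx,
      hRW.stepMean_congr (g := fun y => y r + g y) (fun v hv => hfeq _ ?_) i j,
      stepMean_add_corrector hRW.ha hRW.hh hp hRW.hp1 hRW.hqsum0 hRW.hqsum1 r hc hG hx]
    · simp [φ, hg]
    · linarith [norm_add_le (S n ω) v]
  refine ⟨8 * K ^ 2 + 8 * B ^ 2 + 1, by positivity, ?_⟩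
  filter_upwards [ae_eventually_sq_le_of_bounded_increments hRW.filtration_le hK0 hY hY0 hinc hce]
    with ω hω
  filter_upwards [hω, eventually_ge_atTop 1] with n hn hn1
  have hlog : 0 ≤ n * log n := mul_nonneg (by positivity) (log_nonneg (by exact_mod_cast hn1))
  have hb : (g (S n ω) - g 0) ^ 2 ≤ (2 * B) ^ 2 := by
    have h2 := abs_le.1 (hgB (S n ω))
    have h3 := abs_le.1 (hgB 0)
    exact sq_le_sq' (by linarith) (by linarith)
  have e : S n ω r - n * c = Y n ω - (g (S n ω) - g 0) := by simp only [Y]; ring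
  rw [e]
  have hsq : (Y n ω - (g (S n ω) - g 0)) ^ 2 ≤
      2 * Y n ω ^ 2 + 2 * (g (S n ω) - g 0) ^ 2 := by
    linarith [sq_nonneg (Y n ω + (g (S n ω) - g 0))]
  nlinarith [mul_nonneg (sq_nonneg B) hlog, sq_nonneg K]

end IsRWG

end Walk

end RWG

theorem rwg_slln_rate {Ω : Type} [MeasurableSpace Ω] (P : Measure Ω)
    (a h p α : ℝ) (q : Fin 2 → Fin 2 → Fin 3 → ℝ)
    (S : ℕ → Ω → RWG.E) (F : ℕ → MeasurableSpace Ω)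
    (hRW : RWG.IsRWG P a h p α q S F) (hp : 0 < p) :
    ∀ᵐ ω ∂P, ∃ C > (0 : ℝ), ∃ N : ℕ, ∀ n ≥ N,
      ‖(n : ℝ)⁻¹ • S n ω - RWG.muG a h p α q - (p / (2 - p)) • RWG.mG a h p α q‖ ^ 2 ≤
        C * Real.log n / n := by
  choose C hC hae using fun r => hRW.exists_ae_eventually_sq_le hp r
  filter_upwards [ae_all_iff.2 hae] with ω hω
  have hev := eventually_all.2 hω
  set v := RWG.muG a h p α q + (p / (2 - p)) • RWG.mG a h p α q with hv
  have hsum : 0 < ∑ r, C r := Finset.sum_pos (fun r _ => hC r) Finset.univ_nonempty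
  obtain ⟨N, hN⟩ := eventually_atTop.1 hev
  refine ⟨2 * ∑ r, C r, by positivity, max N 3, fun n hn => ?_⟩
  have hn3 : (3 : ℝ) ≤ n := by exact_mod_cast (le_max_right N 3).trans hn
  have hn0 : (0 : ℝ) < n := by linarith
  have hlog : 1 ≤ log n := by
    rw [le_log_iff_exp_le hn0]
    linarith [exp_one_lt_d9]
  have hcoord : ∀ r, ((n : ℝ)⁻¹ • S n ω - v) r ^ 2 ≤ C r * (2 * log n / n) := fun r => by
    have h1 := hN n ((le_max_left N 3).trans hn) r
    have e : ((n : ℝ)⁻¹ • S n ω - v) r = (S n ω r - n * v r) / n := by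
      simp only [PiLp.sub_apply, PiLp.smul_apply, smul_eq_mul]
      field_simp
    rw [e, div_pow, div_le_iff₀ (by positivity)]
    have h2 : (n : ℝ) * log n + 1 ≤ 2 * (n * log n) := by nlinarith
    calc _ ≤ C r * (n * log n + 1) := h1
      _ ≤ C r * (2 * (n * log n)) := mul_le_mul_of_nonneg_left h2 (hC r).le
      _ = C r * (2 * log n / n) * n ^ 2 := by field_simp
  rw [sub_sub, ← hv, EuclideanSpace.norm_sq_eq]
  calc _ ≤ ∑ r, C r * (2 * log n / n) := Finset.sum_le_sum fun r _ => by
        rw [Real.norm_eq_abs, sq_abs]; exact hcoord r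
    _ = 2 * (∑ r, C r) * log n / n := by rw [← Finset.sum_mul]; ring
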